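/- Let p be an odd prime and k ≥ 1 an integer. Then for μ-almost all α ∈ Q_p, the MR expansion of α is infinite and there exist infinitely many indices i with v_p(a_{2i+1}) ≤ −k, where (a_j) are the partial quotients of the MR expansion of α. -/

import Mathlib

/-!
Put `x_i = α_{2i} - a_{2i}`, a point of `X = pℤ_p`. Two steps of the algorithm act on `X` by one
self-map `T` (`mrStep`), so `x_i = T^i x_0`, where
`T x = 1/y - c`, `y = 1/x - a`, `a = t(1/x)`, `c = s(1/y)`. Since `1/x` lies outside `ℤ_p` and `a`
is congruent to it modulo `ℤ_p`, `v_p(a_{2i+1}) = -v_p(x_i)`. It must be shown that almost every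
orbit is infinite and satisfies `v_p(x_i) ≥ k` infinitely often.

For fixed digits `(a, c)` that occur, the points with these digits form a ball, and `T` is a
bijection from it onto all of `X` that scales distances by a constant (`branch`, `mob_ball`).
Multiplication by an element of `ℚ_p` scales Haar measure by a constant factor, so on each such
branch `T` carries Haar measure to a multiple of Haar measure on `X` (`measure_branch`); as
`μ(X) = 1`, the multiple is the mass of the branch, and no branch has to be counted or measured
explicitly. Hence the digits of `x` are independent of `T x`. In particular, with `r = p^{-k}`,
`μ(r < ‖x‖, T x ∈ A) ≤ q μ(A)` with `q = μ(r < ‖x‖) < 1` (`measure_step_le`), so the points whose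
orbit stays in `r < ‖x‖` for `m` steps have mass at most `q^m`, and those whose orbit stays there
forever form a null set (`measure_stay`). The same inequality shows that `T` pulls null sets back
to null sets, so almost no orbit stays there eventually (`measure_iterate_null`). The expansion
terminates only if some `x_i` is rational, which is again a null condition. Finally `α ↦ x_0` is
locally a translation by one of countably many rationals.

All measure estimates are for outer measure, so measurability of the floor functions is not
required.
-/

open scoped Classical
open MeasureTheory

/-- The `p`-adic valuation on `ℚ_[p]`, with `vp p 0 = ⊤` (i.e. `v_p(0) = +∞`). -/
noncomputable def vp (p : ℕ) [Fact p.Prime] (x : ℚ_[p]) : WithTop ℤ :=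
  if x = 0 then ⊤ else (x.valuation : WithTop ℤ)

/-- `a ∈ ℤ[1/p]`, i.e. `a` is a rational whose denominator is a power of `p`. -/
def InZinvp (p : ℕ) (a : ℚ) : Prop := ∃ n : ℕ, ∃ m : ℤ, a * (p : ℚ) ^ n = m

/-- `a = s(α)`: the unique element of `ℤ[1/p] ∩ (-p/2, p/2)` with `v_p(α - a) ≥ 1`. -/
def IsSFloor (p : ℕ) [Fact p.Prime] (α : ℚ_[p]) (a : ℚ) : Prop :=
  InZinvp p a ∧ -((p : ℚ) / 2) < a ∧ a < (p : ℚ) / 2 ∧ 1 ≤ vp p (α - (a : ℚ_[p]))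

/-- `a = t(α)`: the unique element of `ℤ[1/p] ∩ (-1/2, 1/2)` with `v_p(α - a) ≥ 0`. -/
def IsTFloor (p : ℕ) [Fact p.Prime] (α : ℚ_[p]) (a : ℚ) : Prop :=
  InZinvp p a ∧ -(1 / 2 : ℚ) < a ∧ a < (1 / 2 : ℚ) ∧ 0 ≤ vp p (α - (a : ℚ_[p]))

/-- The Browkin floor function `s` (for odd `p` it exists and is unique). -/
noncomputable def sFloor (p : ℕ) [Fact p.Prime] (α : ℚ_[p]) : ℚ :=
  if h : ∃ a : ℚ, IsSFloor p α a then h.choose else 0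

/-- The Browkin floor function `t` (for odd `p` it exists and is unique). -/
noncomputable def tFloor (p : ℕ) [Fact p.Prime] (α : ℚ_[p]) : ℚ :=
  if h : ∃ a : ℚ, IsTFloor p α a then h.choose else 0

/-- The floor used by the MR algorithm at step `n`: `s` for even `n`, `t` for odd `n`. -/
noncomputable def mrFloor (p : ℕ) [Fact p.Prime] (n : ℕ) (x : ℚ_[p]) : ℚ :=
  if Even n then sFloor p x else tFloor p x

/-- The complete quotients `α_n` of the MR algorithm:
`α_0 = α`, `α_{n+1} = 1/(α_n - a_n)` with `a_n = s(α_n)` for even `n`, `t(α_n)` for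
odd `n`. -/
noncomputable def mrCQ (p : ℕ) [Fact p.Prime] (α : ℚ_[p]) : ℕ → ℚ_[p]
  | 0 => α
  | n + 1 => (mrCQ p α n - ((mrFloor p n (mrCQ p α n) : ℚ) : ℚ_[p]))⁻¹

/-- The partial quotients `a_n` of the MR expansion of `α`. -/
noncomputable def mrPQ (p : ℕ) [Fact p.Prime] (α : ℚ_[p]) (n : ℕ) : ℚ :=
  mrFloor p n (mrCQ p α n)

/-- The MR expansion of `α` reaches step `j`: `α_i ≠ a_i` for all `i < j`. -/
def MRReaches (p : ℕ) [Fact p.Prime] (α : ℚ_[p]) (j : ℕ) : Prop :=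
  ∀ i, i < j → mrCQ p α i ≠ ((mrPQ p α i : ℚ) : ℚ_[p])

/-- The MR expansion of `α` is infinite: `α_n ≠ a_n` for all `n`. -/
def MRInfinite (p : ℕ) [Fact p.Prime] (α : ℚ_[p]) : Prop :=
  ∀ n, mrCQ p α n ≠ ((mrPQ p α n : ℚ) : ℚ_[p])

/-! ### The floor functions -/

theorem one_lt_p (p : ℕ) [Fact p.Prime] : (1 : ℝ) < p := by
  exact_mod_cast (Fact.out : p.Prime).one_lt

theorem one_le_vp_iff (p : ℕ) [Fact p.Prime] (x : ℚ_[p]) : 1 ≤ vp p x ↔ ‖x‖ < 1 := by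
  unfold vp
  split_ifs with h
  · simp [h]
  · rw [Padic.norm_eq_zpow_neg_valuation h, zpow_lt_one_iff_right₀ (one_lt_p p)]
    norm_cast
    omega

theorem zero_le_vp_iff (p : ℕ) [Fact p.Prime] (x : ℚ_[p]) : 0 ≤ vp p x ↔ ‖x‖ ≤ 1 := by
  unfold vp
  split_ifs with h
  · simp [h]
  · rw [Padic.norm_le_one_iff_val_nonneg]
    norm_cast

theorem vp_le_neg_iff (p : ℕ) [Fact p.Prime] (x : ℚ_[p]) (k : ℤ) :
    vp p x ≤ ((-k : ℤ) : WithTop ℤ) ↔ (p : ℝ) ^ k ≤ ‖x‖ := by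
  unfold vp
  split_ifs with h
  · have := zpow_pos (zero_lt_one.trans (one_lt_p p)) k
    simp only [h, norm_zero, top_le_iff, WithTop.coe_ne_top, false_iff, not_le]
    exact this
  · rw [Padic.norm_eq_zpow_neg_valuation h, zpow_le_zpow_iff_right₀ (one_lt_p p)]
    norm_cast
    omega

/-- The common existence statement behind `s` (`e = 1`) and `t` (`e = 0`): scale `α` into `ℤ_p`
by a power of `p` and take the balanced residue of an integer approximation. Oddness of `p`
makes the bounds on that residue strict. -/
theorem exists_digit (p : ℕ) [Fact p.Prime] (hp : Odd p) (α : ℚ_[p]) (e : ℕ) :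
    ∃ a : ℚ, InZinvp p a ∧ -((p : ℚ) ^ e / 2) < a ∧ a < (p : ℚ) ^ e / 2 ∧
      ‖α - (a : ℚ_[p])‖ ≤ ((p : ℝ) ^ e)⁻¹ := by
  have hp1 := one_lt_p p
  have hp0 : (0 : ℝ) < p := by linarith
  have hpq : (0 : ℚ) < p := by exact_mod_cast hp0
  have hpp : (p : ℚ_[p]) ≠ 0 := by exact_mod_cast (Fact.out : p.Prime).ne_zero
  obtain ⟨n, hn⟩ := pow_unbounded_of_one_lt ‖α‖ hp1
  have hβ : ‖α * (p : ℚ_[p]) ^ n‖ ≤ 1 := by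
    rw [norm_mul, norm_pow, Padic.norm_p, inv_pow]
    have : (0 : ℝ) < (p : ℝ) ^ n := by positivity
    rw [← div_eq_mul_inv, div_le_one this]
    exact hn.le
  let β : ℤ_[p] := ⟨α * (p : ℚ_[p]) ^ n, hβ⟩
  set M : ℕ := p ^ (n + e) with hM
  have hMpos : 0 < M := pow_pos (Fact.out : p.Prime).pos _
  set m : ℤ := Int.bmod (β.appr (n + e)) M with hm
  have hodd : Odd M := hp.pow
  have h1 : m < (M + 1) / 2 := Int.bmod_lt hMpos
  have h2 : -((M : ℤ) / 2) ≤ m := Int.le_bmod hMpos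
  obtain ⟨w, hw⟩ := hodd
  have h3 : 2 * m < M := by omega
  have h4 : -(M : ℤ) < 2 * m := by omega
  have h3' : 2 * (m : ℚ) < (p : ℚ) ^ (n + e) := by
    have : ((2 * m : ℤ) : ℚ) < ((M : ℤ) : ℚ) := by exact_mod_cast h3
    simpa [hM] using this
  have h4' : -(p : ℚ) ^ (n + e) < 2 * (m : ℚ) := by
    have : ((-(M : ℤ) : ℤ) : ℚ) < ((2 * m : ℤ) : ℚ) := by exact_mod_cast h4
    simpa [hM] using this
  have hpn : (0 : ℚ) < (p : ℚ) ^ n := by positivity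
  have hβm : ‖β - (m : ℤ_[p])‖ ≤ (p : ℝ) ^ (-((n + e : ℕ) : ℤ)) := by
    rw [PadicInt.norm_le_pow_iff_mem_span_pow]
    have hA := PadicInt.appr_spec (n + e) β
    have hB : (((β.appr (n + e) : ℕ) : ℤ_[p]) - (m : ℤ_[p])) ∈
        Ideal.span {(p : ℤ_[p]) ^ (n + e)} := by
      rw [Ideal.mem_span_singleton]
      have hd : (M : ℤ) ∣ ((β.appr (n + e) : ℕ) : ℤ) - m := by
        have := (Int.dvd_bmod_sub_self (x := ((β.appr (n + e) : ℕ) : ℤ)) (m := M))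
        rw [← neg_sub]
        exact (dvd_neg).2 this
      have := map_dvd (Int.castRingHom ℤ_[p]) hd
      simpa [hM] using this
    have := Ideal.add_mem _ hA hB
    simpa using this
  refine ⟨m / (p : ℚ) ^ n, ⟨n, m, by field_simp⟩, ?_, ?_, ?_⟩
  · rw [lt_div_iff₀ hpn]
    rw [pow_add] at h4'
    linarith
  · rw [div_lt_iff₀ hpn]
    rw [pow_add] at h3'
    linarith
  · have hpn' : (p : ℚ_[p]) ^ n ≠ 0 := pow_ne_zero _ hpp
    have hE : α - ((m / (p : ℚ) ^ n : ℚ) : ℚ_[p])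
        = ((β - (m : ℤ_[p]) : ℤ_[p]) : ℚ_[p]) / (p : ℚ_[p]) ^ n := by
      have : ((β - (m : ℤ_[p]) : ℤ_[p]) : ℚ_[p]) = α * (p : ℚ_[p]) ^ n - (m : ℚ_[p]) := by
        rw [PadicInt.coe_sub, PadicInt.coe_intCast]
      rw [this]
      push_cast
      field_simp
    rw [hE, norm_div, norm_pow, Padic.norm_p]
    rw [← PadicInt.norm_def]
    rw [inv_pow, div_inv_eq_mul]
    rw [zpow_neg, zpow_natCast, pow_add, mul_inv] at hβm
    have hpn2 : (0 : ℝ) < (p : ℝ) ^ n := by positivity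
    calc _ ≤ ((p : ℝ) ^ n)⁻¹ * ((p : ℝ) ^ e)⁻¹ * (p : ℝ) ^ n := by gcongr
      _ = _ := by field_simp

theorem sFloor_spec {p : ℕ} [Fact p.Prime] (hp : Odd p) (α : ℚ_[p]) :
    ‖α - (sFloor p α : ℚ_[p])‖ < 1 := by
  have h : ∃ a : ℚ, IsSFloor p α a := by
    obtain ⟨a, h1, h2, h3, h4⟩ := exists_digit p hp α 1
    refine ⟨a, h1, by simpa using h2, by simpa using h3, ?_⟩
    rw [one_le_vp_iff]
    refine h4.trans_lt ?_
    rw [pow_one]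
    exact inv_lt_one_of_one_lt₀ (one_lt_p p)
  rw [sFloor, dif_pos h, ← one_le_vp_iff]
  exact h.choose_spec.2.2.2

theorem tFloor_spec {p : ℕ} [Fact p.Prime] (hp : Odd p) (α : ℚ_[p]) :
    ‖α - (tFloor p α : ℚ_[p])‖ ≤ 1 := by
  have h : ∃ a : ℚ, IsTFloor p α a := by
    obtain ⟨a, h1, h2, h3, h4⟩ := exists_digit p hp α 0
    refine ⟨a, h1, by simpa using h2, by simpa using h3, ?_⟩
    rw [zero_le_vp_iff]
    simpa using h4
  rw [tFloor, dif_pos h, ← zero_le_vp_iff]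
  exact h.choose_spec.2.2.2

/-- `s` is constant on cosets of `pℤ_p`: congruent arguments have the same candidates for the
floor, so the same one is chosen. Uniqueness of the floor is not needed for this. -/
theorem sFloor_congr {p : ℕ} [Fact p.Prime] {α β : ℚ_[p]} (h : ‖α - β‖ < 1) :
    sFloor p α = sFloor p β := by
  have : IsSFloor p α = IsSFloor p β := by
    funext a
    simp only [IsSFloor, one_le_vp_iff, eq_iff_iff]
    have : ‖α - (a : ℚ_[p])‖ < 1 ↔ ‖β - (a : ℚ_[p])‖ < 1 := by
      simp only [← dist_eq_norm, ← Metric.mem_ball] at h ⊢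
      rw [Metric.mem_ball_comm, Metric.mem_ball_comm (x := β),
        IsUltrametricDist.ball_eq_of_mem h]
    rw [this]
  simp only [sFloor, this]

/-- `t` is constant on cosets of `ℤ_p`. -/
theorem tFloor_congr {p : ℕ} [Fact p.Prime] {α β : ℚ_[p]} (h : ‖α - β‖ ≤ 1) :
    tFloor p α = tFloor p β := by
  have : IsTFloor p α = IsTFloor p β := by
    funext a
    simp only [IsTFloor, zero_le_vp_iff, eq_iff_iff]
    have : ‖α - (a : ℚ_[p])‖ ≤ 1 ↔ ‖β - (a : ℚ_[p])‖ ≤ 1 := by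
      simp only [← dist_eq_norm, ← Metric.mem_closedBall] at h ⊢
      rw [Metric.mem_closedBall_comm, Metric.mem_closedBall_comm (x := β),
        IsUltrametricDist.closedBall_eq_of_mem h]
    rw [this]
  simp only [tFloor, this]

/-! ### Branches of the double step -/

theorem norm_eq_of_sub_lt {p : ℕ} [Fact p.Prime] {x y : ℚ_[p]} (h : ‖x - y‖ < ‖y‖) :
    ‖x‖ = ‖y‖ := by
  have := IsUltrametricDist.norm_add_eq_max_of_norm_ne_norm h.ne
  rw [sub_add_cancel, max_eq_right h.le] at this
  exact this

theorem inv_near {p : ℕ} [Fact p.Prime] {x y : ℚ_[p]} {δ : ℝ} (hδ : δ ≤ ‖y‖)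
    (h : ‖x - y‖ < δ) : ‖x⁻¹ - y⁻¹‖ < δ / ‖y‖ ^ 2 := by
  have hy : 0 < ‖y‖ := ((norm_nonneg _).trans_lt h).trans_le hδ
  have hxy := norm_eq_of_sub_lt (h.trans_le hδ)
  have hx : 0 < ‖x‖ := hxy ▸ hy
  rw [inv_sub_inv (norm_pos_iff.1 hx) (norm_pos_iff.1 hy), norm_div, norm_mul, hxy, ← sq,
    norm_sub_rev]
  gcongr

/-- Inversion maps the ball of radius `δ ≤ ‖y‖` about `y` exactly onto the ball of radius
`δ / ‖y‖ ^ 2` about `y⁻¹`. -/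
theorem inv_near_iff {p : ℕ} [Fact p.Prime] {x y : ℚ_[p]} {δ : ℝ} (hy : y ≠ 0) (hδ : δ ≤ ‖y‖) :
    ‖x - y‖ < δ ↔ ‖x⁻¹ - y⁻¹‖ < δ / ‖y‖ ^ 2 := by
  refine ⟨inv_near hδ, fun h => ?_⟩
  have hy' : 0 < ‖y‖ := norm_pos_iff.2 hy
  have := inv_near (x := x⁻¹) (y := y⁻¹) (δ := δ / ‖y‖ ^ 2) (by
    rw [norm_inv, div_le_iff₀ (by positivity)]
    field_simp
    exact hδ) h
  rw [inv_inv, inv_inv, norm_inv] at this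
  field_simp at this
  exact this

/-- One double step of the algorithm with prescribed partial quotients (digits) `a`, `c`. Since
`0⁻¹ = 0`, it is a bijection of `ℚ_p`, and it may be applied to every point. -/
noncomputable def mob {p : ℕ} [Fact p.Prime] (a c x : ℚ_[p]) : ℚ_[p] := (x⁻¹ - a)⁻¹ - c

/-- The preimage under `mob a c` of a ball of radius `r ≤ 1` about `mob a c y` is the ball of
radius `r * ‖y * (y⁻¹ - a)‖ ^ 2` about `y`: two applications of `inv_near_iff`, the first of which
is recorded as an intermediate equivalence. -/
theorem mob_ball {p : ℕ} [Fact p.Prime] {a c x y : ℚ_[p]} {r : ℝ} (hr : r ≤ 1) (hy : y ≠ 0)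
    (hy1 : ‖y‖ ≤ 1) (hya : y⁻¹ - a ≠ 0) (hya1 : ‖y⁻¹ - a‖ ≤ 1) :
    (‖mob a c x - mob a c y‖ < r ↔ ‖(x⁻¹ - a) - (y⁻¹ - a)‖ < r * ‖y⁻¹ - a‖ ^ 2) ∧
    (‖mob a c x - mob a c y‖ < r ↔ ‖x - y‖ < r * ‖y * (y⁻¹ - a)‖ ^ 2) := by
  have h0 : 0 < ‖y‖ := norm_pos_iff.2 hy
  have h1 : 0 < ‖y⁻¹ - a‖ := norm_pos_iff.2 hya
  have hle : r * ‖y⁻¹ - a‖ ^ 2 ≤ ‖y⁻¹ - a‖ := by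
    nlinarith [mul_le_mul_of_nonneg_right hr (sq_nonneg ‖y⁻¹ - a‖)]
  have hle2 : r * ‖y * (y⁻¹ - a)‖ ^ 2 ≤ ‖y‖ := by
    rw [norm_mul, mul_pow]
    calc r * (‖y‖ ^ 2 * ‖y⁻¹ - a‖ ^ 2) = (r * ‖y⁻¹ - a‖ ^ 2) * ‖y‖ * ‖y‖ := by ring
      _ ≤ 1 * 1 * ‖y‖ := by
        gcongr
        exact hle.trans hya1
      _ = ‖y‖ := by ring
  have e1 : ‖mob a c x - mob a c y‖ < r ↔ ‖(x⁻¹ - a) - (y⁻¹ - a)‖ < r * ‖y⁻¹ - a‖ ^ 2 := by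
    rw [inv_near_iff hya hle, mul_div_assoc, div_self (by positivity), mul_one]
    simp [mob]
  refine ⟨e1, e1.trans ?_⟩
  rw [inv_near_iff hy hle2, sub_sub_sub_cancel_right, norm_mul, mul_pow]
  have : r * (‖y‖ ^ 2 * ‖y⁻¹ - a‖ ^ 2) / ‖y‖ ^ 2 = r * ‖y⁻¹ - a‖ ^ 2 := by
    field_simp
  rw [this]

/-- The first digit `t(1/x)` read off from `x ∈ pℤ_p` by a double step of the algorithm. -/
noncomputable def dig1 (p : ℕ) [Fact p.Prime] (x : ℚ_[p]) : ℚ := tFloor p x⁻¹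

/-- The second digit read off from `x ∈ pℤ_p` by a double step of the algorithm. -/
noncomputable def dig2 (p : ℕ) [Fact p.Prime] (x : ℚ_[p]) : ℚ :=
  sFloor p (x⁻¹ - (dig1 p x : ℚ_[p]))⁻¹

/-- The double step `α_{2i} - a_{2i} ↦ α_{2i+2} - a_{2i+2}`, as a self-map of `pℤ_p`. -/
noncomputable def mrStep (p : ℕ) [Fact p.Prime] (x : ℚ_[p]) : ℚ_[p] :=
  mob (dig1 p x : ℚ_[p]) (dig2 p x : ℚ_[p]) x

theorem mrStep_norm {p : ℕ} [Fact p.Prime] (hp : Odd p) (x : ℚ_[p]) : ‖mrStep p x‖ < 1 :=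
  sFloor_spec hp _

/-- Full branches: if `y ∈ pℤ_p` has digits `a`, `c`, then every `x` that the map with digits
`a`, `c` sends into `pℤ_p` is close enough to `y` to have the same digits, and agrees with `y` in
all the absolute values that matter. -/
theorem branch {p : ℕ} [Fact p.Prime] (hp : Odd p) {x y : ℚ_[p]} (hy : ‖y‖ < 1)
    (hy0 : y ≠ 0) (hya : y⁻¹ - (dig1 p y : ℚ_[p]) ≠ 0)
    (hx : ‖mob (dig1 p y : ℚ_[p]) (dig2 p y : ℚ_[p]) x‖ < 1) :
    ‖x‖ = ‖y‖ ∧ ‖x⁻¹ - (dig1 p y : ℚ_[p])‖ = ‖y⁻¹ - (dig1 p y : ℚ_[p])‖ ∧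
      dig1 p x = dig1 p y ∧ dig2 p x = dig2 p y := by
  set a : ℚ_[p] := (dig1 p y : ℚ_[p]) with ha
  set c : ℚ_[p] := (dig2 p y : ℚ_[p]) with hc
  have hya1 : ‖y⁻¹ - a‖ ≤ 1 := tFloor_spec hp _
  have hT : ‖mob a c y‖ < 1 := mrStep_norm hp y
  have hd : ‖mob a c x - mob a c y‖ < 1 := by
    have := IsUltrametricDist.norm_add_le_max (mob a c x) (-mob a c y)
    rw [norm_neg, ← sub_eq_add_neg] at this
    exact this.trans_lt (max_lt hx hT)
  obtain ⟨e1, e2⟩ := mob_ball (c := c) (x := x) le_rfl hy0 hy.le hya hya1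
  have h1 := e1.1 hd
  have h2 := e2.1 hd
  have h0 : 0 < ‖y‖ := norm_pos_iff.2 hy0
  have h0a : 0 < ‖y⁻¹ - a‖ := norm_pos_iff.2 hya
  rw [one_mul] at h1 h2
  have h1' : ‖(x⁻¹ - a) - (y⁻¹ - a)‖ < ‖y⁻¹ - a‖ := h1.trans_le (by nlinarith)
  have h2' : ‖x - y‖ < ‖y‖ := by
    refine h2.trans_le ?_
    rw [norm_mul, mul_pow]
    calc ‖y‖ ^ 2 * ‖y⁻¹ - a‖ ^ 2 ≤ ‖y‖ ^ 2 * 1 ^ 2 := by gcongr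
      _ ≤ ‖y‖ := by nlinarith
  have d1 : dig1 p x = dig1 p y := by
    refine tFloor_congr ?_
    have := h1'.le.trans hya1
    rwa [sub_sub_sub_cancel_right] at this
  refine ⟨norm_eq_of_sub_lt h2', norm_eq_of_sub_lt h1', d1, ?_⟩
  unfold dig2
  rw [d1]
  refine sFloor_congr ?_
  simpa [mob] using hd

/-! ### Haar measure of a branch -/

theorem measurable_mob {p : ℕ} [Fact p.Prime] [MeasurableSpace ℚ_[p]] [BorelSpace ℚ_[p]]
    (a c : ℚ_[p]) : Measurable (mob a c) :=
  ((measurable_id.inv.sub_const a).inv).sub_const c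

theorem mob_surjective {p : ℕ} [Fact p.Prime] (a c z : ℚ_[p]) : ∃ x, mob a c x = z :=
  ⟨(a + (c + z)⁻¹)⁻¹, by simp [mob]⟩

open scoped Pointwise in
/-- The measure of a ball scales by a factor depending only on the factor of the radius. The
factor is the modulus of multiplication by `u`; its value is not needed. -/
theorem measure_ball_scale {p : ℕ} [Fact p.Prime] [MeasurableSpace ℚ_[p]] [BorelSpace ℚ_[p]]
    (μ : Measure ℚ_[p]) [μ.IsAddHaarMeasure] {u : ℚ_[p]} (hu : u ≠ 0) :
    ∃ χ : ENNReal, ∀ (x y : ℚ_[p]) (r : ℝ),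
      μ (Metric.ball x (r * ‖u‖)) = χ * μ (Metric.ball y r) := by
  refine ⟨distribHaarChar ℚ_[p] (Units.mk0 u hu), fun x y r => ?_⟩
  have hb : ∀ (z : ℚ_[p]) (s : ℝ), μ (Metric.ball z s) = μ (Metric.ball 0 s) := fun z s => by
    rw [← measure_preimage_add_right μ z (Metric.ball z s)]
    congr 1
    ext w
    simp
  rw [hb x, hb y, distribHaarChar_mul]
  congr 1
  have : (Units.mk0 u hu) • Metric.ball (0 : ℚ_[p]) r = u • Metric.ball (0 : ℚ_[p]) r := rfl
  rw [this, smul_ball hu, smul_zero, mul_comm]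

theorem isTopologicalBasis_balls (X : Type*) [PseudoMetricSpace X] :
    TopologicalSpace.IsTopologicalBasis {s : Set X | ∃ x r, s = Metric.ball x r} := by
  refine TopologicalSpace.isTopologicalBasis_of_isOpen_of_nhds ?_ ?_
  · rintro _ ⟨x, r, rfl⟩
    exact Metric.isOpen_ball
  · intro x U hx hU
    obtain ⟨r, hr, hrU⟩ := Metric.isOpen_iff.1 hU x hx
    exact ⟨_, ⟨x, r, rfl⟩, Metric.mem_ball_self hr, hrU⟩

theorem isPiSystem_balls (X : Type*) [PseudoMetricSpace X] [IsUltrametricDist X] :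
    IsPiSystem {s : Set X | ∃ x r, s = Metric.ball x r} := by
  rintro _ ⟨x, r, rfl⟩ _ ⟨y, t, rfl⟩ hne
  rcases IsUltrametricDist.ball_subset_trichotomy x y r t with h | h | h
  · exact ⟨x, r, Set.inter_eq_left.2 h⟩
  · exact ⟨y, t, Set.inter_eq_right.2 h⟩
  · exact absurd (Set.disjoint_iff_inter_eq_empty.1 h) hne.ne_empty

/-- On a full branch the double step pushes Haar measure forward to a multiple of Haar measure on
`pℤ_p`, the factor being the mass of the branch. Both are finite measures, so comparing them on
balls suffices, and there `mob_ball` and `measure_ball_scale` apply. The conclusion is stated as a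
bound on outer measure, so that `A` need not be measurable. -/
theorem measure_branch {p : ℕ} [Fact p.Prime] (hp : Odd p) [MeasurableSpace ℚ_[p]]
    [BorelSpace ℚ_[p]] (μ : Measure ℚ_[p]) [μ.IsAddHaarMeasure]
    (hμ : μ (Metric.ball 0 1) = 1) {y : ℚ_[p]} (hy : ‖y‖ < 1)
    (hy0 : y ≠ 0) (hya : y⁻¹ - (dig1 p y : ℚ_[p]) ≠ 0) (A : Set ℚ_[p]) :
    μ (mob (dig1 p y : ℚ_[p]) (dig2 p y : ℚ_[p]) ⁻¹' (A ∩ Metric.ball 0 1)) ≤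
      μ (mob (dig1 p y : ℚ_[p]) (dig2 p y : ℚ_[p]) ⁻¹' Metric.ball 0 1) * μ A := by
  set a : ℚ_[p] := (dig1 p y : ℚ_[p]) with ha
  set c : ℚ_[p] := (dig2 p y : ℚ_[p]) with hc
  set X : Set ℚ_[p] := Metric.ball 0 1 with hX
  have hXm : MeasurableSet X := Metric.isOpen_ball.measurableSet
  have hgm := measurable_mob a c
  set u : ℚ_[p] := (y * (y⁻¹ - a)) ^ 2 with hu
  obtain ⟨χ, hχ⟩ := measure_ball_scale μ (u := u) (pow_ne_zero _ (mul_ne_zero hy0 hya))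
  -- Every preimage of a point of `pℤ_p` has the same `‖x * (x⁻¹ - a)‖` as `y`, so one factor `χ`
  -- serves all balls inside `pℤ_p`.
  have key : ∀ (z : ℚ_[p]) (r : ℝ), z ∈ X → r ≤ 1 →
      μ (mob a c ⁻¹' Metric.ball z r) = χ * μ (Metric.ball z r) := by
    intro z r hz hr
    obtain ⟨x, rfl⟩ := mob_surjective a c z
    have hx : ‖mob a c x‖ < 1 := by simpa [hX] using hz
    obtain ⟨b1, b2, -, -⟩ := branch hp hy hy0 hya hx
    rw [← ha] at b2
    rw [← hχ x (mob a c x) r]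
    congr 1
    ext w
    have hx0 : x ≠ 0 := by
      rw [← norm_pos_iff, b1]
      exact norm_pos_iff.2 hy0
    have hxa : x⁻¹ - a ≠ 0 := by
      rw [← norm_pos_iff, b2]
      exact norm_pos_iff.2 hya
    have hxa1 : ‖x⁻¹ - a‖ ≤ 1 := b2 ▸ tFloor_spec hp _
    have := (mob_ball (c := c) (x := w) hr hx0 (b1 ▸ hy.le) hxa hxa1).2
    rw [Set.mem_preimage, Metric.mem_ball, Metric.mem_ball, dist_eq_norm, dist_eq_norm, this, hu,
      norm_pow, norm_mul, norm_mul, b1, b2]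
  have hX0 : (0 : ℚ_[p]) ∈ X := by simp [hX]
  have hκ : μ (mob a c ⁻¹' X) = χ := by
    have := key 0 1 hX0 le_rfl
    rwa [← hX, hμ, mul_one] at this
  have hχtop : χ ≠ ⊤ := by
    have h1 := hχ 0 0 1
    rw [← hX, hμ, mul_one] at h1
    rw [← h1]
    exact measure_ball_lt_top.ne
  have heq : (μ.map (mob a c)).restrict X = χ • μ.restrict X := by
    have huniv : ((μ.map (mob a c)).restrict X) Set.univ = (χ • μ.restrict X) Set.univ := by
      rw [Measure.restrict_apply MeasurableSet.univ, Set.univ_inter, Measure.map_apply hgm hXm,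
        Measure.smul_apply, Measure.restrict_apply MeasurableSet.univ, Set.univ_inter, hκ, hμ,
        smul_eq_mul, mul_one]
    have : IsFiniteMeasure ((μ.map (mob a c)).restrict X) := by
      refine ⟨?_⟩
      rw [Measure.restrict_apply MeasurableSet.univ, Set.univ_inter, Measure.map_apply hgm hXm, hκ]
      exact hχtop.lt_top
    refine ext_of_generate_finite _
      ((BorelSpace.measurable_eq (α := ℚ_[p])).trans
        (isTopologicalBasis_balls ℚ_[p]).borel_eq_generateFrom)
      (isPiSystem_balls ℚ_[p]) ?_ huniv
    rintro _ ⟨z, r, rfl⟩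
    have hbm : MeasurableSet (Metric.ball z r) := Metric.isOpen_ball.measurableSet
    rw [Measure.restrict_apply hbm, Measure.smul_apply, Measure.restrict_apply hbm,
      Measure.map_apply hgm (hbm.inter hXm), smul_eq_mul]
    by_cases hd : Disjoint (Metric.ball z r) X
    · rw [Set.disjoint_iff_inter_eq_empty.1 hd]
      simp
    · obtain ⟨w, hw, hwX⟩ := Set.not_disjoint_iff.1 hd
      rw [IsUltrametricDist.ball_eq_of_mem hw]
      have hXw : X = Metric.ball w 1 := IsUltrametricDist.ball_eq_of_mem hwX
      have : Metric.ball w r ∩ X = Metric.ball w (min r 1) := by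
        rw [hXw]
        ext v
        simp
      rw [this]
      exact key w _ hwX (min_le_right _ _)
  set A' := toMeasurable μ A with hA'
  have hAm : MeasurableSet A' := measurableSet_toMeasurable μ A
  calc μ (mob a c ⁻¹' (A ∩ X)) ≤ μ (mob a c ⁻¹' (A' ∩ X)) :=
        measure_mono (Set.preimage_mono (Set.inter_subset_inter_left _ (subset_toMeasurable μ A)))
    _ = ((μ.map (mob a c)).restrict X) A' := by
        rw [Measure.restrict_apply hAm, Measure.map_apply hgm (hAm.inter hXm)]
    _ = χ * μ (A' ∩ X) := by
        rw [heq, Measure.smul_apply, Measure.restrict_apply hAm, smul_eq_mul]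
    _ ≤ μ (mob a c ⁻¹' X) * μ A := by
        rw [hκ, ← measure_toMeasurable A]
        gcongr
        exact Set.inter_subset_left

/-! ### Orbits of the double step -/

/-- The rational points of `ℚ_p`; off this null set the expansion does not terminate. -/
def ratPts (p : ℕ) [Fact p.Prime] : Set ℚ_[p] := Set.range (fun q : ℚ => (q : ℚ_[p]))

theorem ratPts_ne {p : ℕ} [Fact p.Prime] {x : ℚ_[p]} (hx : x ∉ ratPts p) :
    x ≠ 0 ∧ x⁻¹ - (dig1 p x : ℚ_[p]) ≠ 0 := by
  refine ⟨fun h => hx ⟨0, by simp [h]⟩, fun h => hx ⟨(dig1 p x)⁻¹, ?_⟩⟩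
  have := sub_eq_zero.1 h
  simp only [Rat.cast_inv]
  rw [← this, inv_inv]

/-- Summing over branches: the event `r < ‖x‖`, which off the rational points depends only on the
first digit, is independent of the position of the next point of the orbit. Only the upper bound
is needed, and it holds for arbitrary `A`. -/
theorem measure_step_le {p : ℕ} [Fact p.Prime] (hp : Odd p) [MeasurableSpace ℚ_[p]]
    [BorelSpace ℚ_[p]] (μ : Measure ℚ_[p]) [μ.IsAddHaarMeasure]
    (hμ : μ (Metric.ball 0 1) = 1) (r : ℝ) (A : Set ℚ_[p]) :
    μ {x | ‖x‖ < 1 ∧ x ∉ ratPts p ∧ r < ‖x‖ ∧ mrStep p x ∈ A} ≤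
      μ {x | ‖x‖ < 1 ∧ r < ‖x‖} * μ A := by
  -- The pairs of digits that occur in the event; distinct pairs have disjoint branches.
  let J : Set (ℚ × ℚ) :=
    {b | ∃ y, ‖y‖ < 1 ∧ y ∉ ratPts p ∧ r < ‖y‖ ∧ b = (dig1 p y, dig2 p y)}
  let Br : J → Set ℚ_[p] := fun b =>
    mob (b.1.1 : ℚ_[p]) (b.1.2 : ℚ_[p]) ⁻¹' Metric.ball 0 1
  have hBrm : ∀ b, MeasurableSet (Br b) := fun b =>
    measurable_mob _ _ Metric.isOpen_ball.measurableSet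
  have hdig : ∀ (b : J) x, x ∈ Br b → (‖x‖ < 1 ∧ r < ‖x‖) ∧ (dig1 p x, dig2 p x) = b.1 := by
    rintro ⟨_, y, hy, hyq, hry, rfl⟩ x hx
    obtain ⟨hy0, hya⟩ := ratPts_ne hyq
    obtain ⟨b1, -, b3, b4⟩ := branch hp hy hy0 hya (by simpa [Br] using hx)
    exact ⟨by rw [b1]; exact ⟨hy, hry⟩, by rw [b3, b4]⟩
  have hdisj : Pairwise (Function.onFun Disjoint Br) := by
    intro b b' hbb
    refine Set.disjoint_left.2 fun x hx hx' => hbb (Subtype.ext ?_)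
    rw [← (hdig b x hx).2, ← (hdig b' x hx').2]
  have hsub : {x | ‖x‖ < 1 ∧ x ∉ ratPts p ∧ r < ‖x‖ ∧ mrStep p x ∈ A} ⊆
      ⋃ b : J, mob (b.1.1 : ℚ_[p]) (b.1.2 : ℚ_[p]) ⁻¹' (A ∩ Metric.ball 0 1) := by
    rintro x ⟨hx, hxq, hrx, hxA⟩
    refine Set.mem_iUnion.2 ⟨⟨_, x, hx, hxq, hrx, rfl⟩, hxA, ?_⟩
    rw [mem_ball_zero_iff]
    exact mrStep_norm hp x
  calc _ ≤ μ (⋃ b : J, mob (b.1.1 : ℚ_[p]) (b.1.2 : ℚ_[p]) ⁻¹' (A ∩ Metric.ball 0 1)) :=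
        measure_mono hsub
    _ ≤ ∑' b : J, μ (mob (b.1.1 : ℚ_[p]) (b.1.2 : ℚ_[p]) ⁻¹' (A ∩ Metric.ball 0 1)) :=
        measure_iUnion_le _
    _ ≤ ∑' b : J, μ (Br b) * μ A := by
        refine ENNReal.tsum_le_tsum ?_
        rintro ⟨_, y, hy, hyq, hry, rfl⟩
        obtain ⟨hy0, hya⟩ := ratPts_ne hyq
        exact measure_branch hp μ hμ hy hy0 hya A
    _ = μ (⋃ b, Br b) * μ A := by
        rw [ENNReal.tsum_mul_right, measure_iUnion hdisj hBrm]
    _ ≤ _ := by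
        gcongr
        exact Set.iUnion_subset fun b x hx => (hdig b x hx).1

theorem measure_ratPts {p : ℕ} [Fact p.Prime] [MeasurableSpace ℚ_[p]]
    [BorelSpace ℚ_[p]] (μ : Measure ℚ_[p]) [μ.IsAddHaarMeasure] : μ (ratPts p) = 0 :=
  (Set.countable_range _).measure_zero μ

/-- Some ball about `0` is missed by the event, so its probability is below `1`. -/
theorem measure_annulus_lt {p : ℕ} [Fact p.Prime] [MeasurableSpace ℚ_[p]]
    [BorelSpace ℚ_[p]] (μ : Measure ℚ_[p]) [μ.IsAddHaarMeasure]
    (hμ : μ (Metric.ball 0 1) = 1) {r : ℝ} (hr : 0 < r) (hr1 : r ≤ 1) :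
    μ {x : ℚ_[p] | ‖x‖ < 1 ∧ r < ‖x‖} < 1 := by
  have hsub : {x : ℚ_[p] | ‖x‖ < 1 ∧ r < ‖x‖} ⊆ Metric.ball 0 1 \ Metric.ball 0 r := by
    rintro x ⟨h1, h2⟩
    simp [h1, h2.le]
  refine (measure_mono hsub).trans_lt ?_
  rw [measure_sdiff (Metric.ball_subset_ball hr1) Metric.isOpen_ball.measurableSet.nullMeasurableSet
    measure_ball_lt_top.ne, hμ]
  exact ENNReal.sub_lt_self ENNReal.one_ne_top one_ne_zero (Metric.measure_ball_pos μ 0 hr).ne'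

/-- Almost no orbit stays in the region `r < ‖x‖` forever: staying there for `m` steps has
probability at most `q ^ m`, with `q < 1`. -/
theorem measure_stay {p : ℕ} [Fact p.Prime] (hp : Odd p) [MeasurableSpace ℚ_[p]]
    [BorelSpace ℚ_[p]] (μ : Measure ℚ_[p]) [μ.IsAddHaarMeasure]
    (hμ : μ (Metric.ball 0 1) = 1) {r : ℝ} (hr : 0 < r) (hr1 : r ≤ 1) :
    μ {x | ‖x‖ < 1 ∧ ∀ i, (mrStep p)^[i] x ∉ ratPts p ∧ r < ‖(mrStep p)^[i] x‖} = 0 := by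
  set q := μ {x : ℚ_[p] | ‖x‖ < 1 ∧ r < ‖x‖} with hq
  have hq1 : q < 1 := measure_annulus_lt μ hμ hr hr1
  have hb : ∀ m : ℕ, μ {x | ‖x‖ < 1 ∧ ∀ i < m, (mrStep p)^[i] x ∉ ratPts p ∧
      r < ‖(mrStep p)^[i] x‖} ≤ q ^ m := by
    intro m
    induction m with
    | zero =>
      rw [pow_zero, ← hμ]
      refine measure_mono fun x hx => ?_
      simpa using hx.1
    | succ m ih =>
      rw [pow_succ']
      refine le_trans (measure_mono ?_) ((measure_step_le hp μ hμ r _).trans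
        (mul_le_mul_right ih q))
      rintro x ⟨hx, hxi⟩
      have h0 := hxi 0 (Nat.succ_pos _)
      exact ⟨hx, h0.1, h0.2, mrStep_norm hp x, fun i hi => hxi (i + 1) (by omega)⟩
  refine le_antisymm (ge_of_tendsto' (ENNReal.tendsto_pow_atTop_nhds_zero_of_lt_one hq1)
    fun m => le_trans (measure_mono ?_) (hb m)) zero_le
  exact fun x hx => ⟨hx.1, fun i _ => hx.2 i⟩

/-- The double step pulls null sets back to null sets, and so do its iterates. -/
theorem measure_iterate_null {p : ℕ} [Fact p.Prime] (hp : Odd p) [MeasurableSpace ℚ_[p]]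
    [BorelSpace ℚ_[p]] (μ : Measure ℚ_[p]) [μ.IsAddHaarMeasure]
    (hμ : μ (Metric.ball 0 1) = 1) {N : Set ℚ_[p]} (hN : μ N = 0) (n : ℕ) :
    μ {x | ‖x‖ < 1 ∧ (mrStep p)^[n] x ∈ N} = 0 := by
  induction n with
  | zero => exact measure_mono_null (fun x hx => hx.2) hN
  | succ n ih =>
    -- With `r = -1` the condition `r < ‖x‖` is vacuous.
    have h := measure_step_le hp μ hμ (-1) {x | ‖x‖ < 1 ∧ (mrStep p)^[n] x ∈ N}
    rw [ih, mul_zero] at h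
    refine measure_mono_null ?_ (measure_union_null (measure_ratPts μ) (le_antisymm h zero_le))
    rintro x ⟨hx, hxN⟩
    by_cases hxq : x ∈ ratPts p
    · exact Or.inl hxq
    · exact Or.inr ⟨hx, hxq, by linarith [norm_nonneg x], mrStep_norm hp x, hxN⟩

/-! ### The expansion as an orbit of the double step -/

theorem mrPQ_even {p : ℕ} [Fact p.Prime] (α : ℚ_[p]) (i : ℕ) :
    mrPQ p α (2 * i) = sFloor p (mrCQ p α (2 * i)) := by
  simp [mrPQ, mrFloor]

theorem mrPQ_odd {p : ℕ} [Fact p.Prime] (α : ℚ_[p]) (i : ℕ) :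
    mrPQ p α (2 * i + 1) = tFloor p (mrCQ p α (2 * i + 1)) := by
  simp [mrPQ, mrFloor]

theorem mrCQ_succ {p : ℕ} [Fact p.Prime] (α : ℚ_[p]) (n : ℕ) :
    mrCQ p α (n + 1) = (mrCQ p α n - (mrPQ p α n : ℚ_[p]))⁻¹ := rfl

theorem mrCQ_sub_even {p : ℕ} [Fact p.Prime] (α : ℚ_[p]) (i : ℕ) :
    mrCQ p α (2 * i) - (mrPQ p α (2 * i) : ℚ_[p]) =
      (mrStep p)^[i] (α - (sFloor p α : ℚ_[p])) := by
  induction i with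
  | zero => simp [mrPQ, mrFloor, mrCQ]
  | succ i ih =>
    rw [Function.iterate_succ_apply', ← ih, mrPQ_even, show 2 * (i + 1) = 2 * i + 1 + 1 by ring,
      mrCQ_succ α (2 * i + 1), mrPQ_odd, mrCQ_succ α (2 * i)]
    rfl

theorem mrCQ_odd {p : ℕ} [Fact p.Prime] (α : ℚ_[p]) (i : ℕ) :
    mrCQ p α (2 * i + 1) = ((mrStep p)^[i] (α - (sFloor p α : ℚ_[p])))⁻¹ := by
  rw [mrCQ_succ, mrCQ_sub_even]

theorem norm_iterate {p : ℕ} [Fact p.Prime] (hp : Odd p) {x : ℚ_[p]} (hx : ‖x‖ < 1) (i : ℕ) :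
    ‖(mrStep p)^[i] x‖ < 1 := by
  cases i with
  | zero => exact hx
  | succ i =>
    rw [Function.iterate_succ_apply']
    exact mrStep_norm hp _

/-- `v_p(a_{2i+1}) = -v_p(α_{2i} - a_{2i})`, in terms of absolute values. -/
theorem norm_mrPQ_odd {p : ℕ} [Fact p.Prime] (hp : Odd p) (α : ℚ_[p]) (i : ℕ)
    (h0 : (mrStep p)^[i] (α - (sFloor p α : ℚ_[p])) ≠ 0) :
    ‖(mrPQ p α (2 * i + 1) : ℚ_[p])‖ = ‖(mrStep p)^[i] (α - (sFloor p α : ℚ_[p]))‖⁻¹ := by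
  rw [mrPQ_odd, mrCQ_odd, ← norm_inv]
  set x := (mrStep p)^[i] (α - (sFloor p α : ℚ_[p]))
  have hx1 : ‖x‖ < 1 := norm_iterate hp (sFloor_spec hp α) i
  have h1 : 1 < ‖x⁻¹‖ := by
    rw [norm_inv]
    exact (one_lt_inv₀ (norm_pos_iff.2 h0)).2 hx1
  refine norm_eq_of_sub_lt (lt_of_le_of_lt ?_ h1)
  rw [norm_sub_rev]
  exact tFloor_spec hp _

/-- for an odd prime `p` and an integer `k ≥ 1`, for `μ`-almost all
`α ∈ ℚ_p` the MR expansion of `α` is infinite and there are infinitely many indices `i`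
with `v_p(a_{2i+1}) ≤ -k`. -/
theorem stmt19 (p : ℕ) [Fact p.Prime] (hp : Odd p)
    [MeasurableSpace ℚ_[p]] [BorelSpace ℚ_[p]]
    (μ : Measure ℚ_[p]) [μ.IsAddHaarMeasure]
    (hμ : μ {α : ℚ_[p] | 1 ≤ vp p α} = 1)
    (k : ℤ) (hk : 1 ≤ k) :
    ∀ᵐ α ∂μ, MRInfinite p α ∧
      {i : ℕ | vp p ((mrPQ p α (2 * i + 1) : ℚ) : ℚ_[p]) ≤ ((-k : ℤ) : WithTop ℤ)}.Infinite := by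
  have hμ1 : μ (Metric.ball 0 1) = 1 := by
    rw [← hμ]
    congr 1
    ext x
    simp [one_le_vp_iff]
  have hpk : (1 : ℝ) ≤ (p : ℝ) ^ k := one_le_zpow₀ (one_lt_p p).le (by omega)
  set r : ℝ := ((p : ℝ) ^ k)⁻¹ with hr
  have hr0 : 0 < r := by positivity
  have hr1 : r ≤ 1 := inv_le_one_of_one_le₀ hpk
  set N : Set ℚ_[p] := ratPts p ∪
    {x | ‖x‖ < 1 ∧ ∀ i, (mrStep p)^[i] x ∉ ratPts p ∧ r < ‖(mrStep p)^[i] x‖} with hNdef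
  have hN : μ N = 0 := measure_union_null (measure_ratPts μ) (measure_stay hp μ hμ1 hr0 hr1)
  -- `α ↦ α - s(α)` is a translation by one of countably many rationals on each coset of `pℤ_p`.
  have hbad : μ (⋃ n : ℕ, ⋃ q : ℚ, (fun α : ℚ_[p] => α + (-(q : ℚ_[p]))) ⁻¹'
      {x | ‖x‖ < 1 ∧ (mrStep p)^[n] x ∈ N}) = 0 := by
    refine measure_iUnion_null fun n => measure_iUnion_null fun q => ?_
    rw [measure_preimage_add_right]
    exact measure_iterate_null hp μ hμ1 hN n
  filter_upwards [measure_eq_zero_iff_ae_notMem.1 hbad] with α hα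
  set x := α - (sFloor p α : ℚ_[p]) with hx
  have hx1 : ‖x‖ < 1 := sFloor_spec hp α
  have hgood : ∀ n, (mrStep p)^[n] x ∉ N := by
    intro n hn
    refine hα (Set.mem_iUnion.2 ⟨n, Set.mem_iUnion.2 ⟨sFloor p α, ?_⟩⟩)
    rw [Set.mem_preimage, ← sub_eq_add_neg]
    exact ⟨hx1, hn⟩
  have hirr : ∀ n, (mrStep p)^[n] x ∉ ratPts p := fun n h => hgood n (Or.inl h)
  refine ⟨fun n => ?_, fun hfin => ?_⟩
  · rw [← sub_ne_zero]
    rcases Nat.even_or_odd' n with ⟨i, rfl | rfl⟩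
    · rw [mrCQ_sub_even]
      exact (ratPts_ne (hirr i)).1
    · rw [mrPQ_odd, mrCQ_odd]
      exact (ratPts_ne (hirr i)).2
  -- If the good indices were bounded by `n`, the orbit would stay in `r < ‖x‖` from `n + 1` on.
  · obtain ⟨n, hn⟩ := hfin.bddAbove
    refine hgood (n + 1) (Or.inr ⟨norm_iterate hp hx1 _, fun i => ?_⟩)
    rw [← Function.iterate_add_apply]
    refine ⟨hirr _, ?_⟩
    by_contra hle
    have h0 := (ratPts_ne (hirr (i + (n + 1)))).1
    have : i + (n + 1) ≤ n := by
      refine hn ?_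
      rw [Set.mem_ofPred_eq, vp_le_neg_iff, norm_mrPQ_odd hp α _ h0]
      rw [le_inv_comm₀ (by positivity) (norm_pos_iff.2 h0)]
      exact not_lt.1 hle
    omega
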